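/- Let A ∈ ℝ^{m×n}, c ∈ ℝ^m, t > 0, C_norm > 0, and let a, d ∈ ℝ^m satisfy d_i > 0 and |a_i| ≤ √(d_i) for all i ∈ [m]. For u ∈ ℝ^m_{>0} define δ_t(u) = inf_{η∈ℝⁿ} ‖(t·c + u·a − Aη)/(u·√d)‖_{u+∞}, where all vector operations are entrywise and ‖y‖_{u+∞} = ‖y‖_∞ + C_norm·‖y‖_u. If w, v ∈ ℝ^m_{>0} and ε = ‖log(w) − log(v)‖_{w+∞} ≤ 1/10 (log taken entrywise), then δ_t(v) ≤ (1 + 4ε)·(δ_t(w) + ε). -/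

import Mathlib

open Matrix Real BigOperators Pointwise

/-- The weighted norm `‖x‖_w = (∑ i, w i * x i ^ 2) ^ (1/2)`. -/
noncomputable def wNorm {m : ℕ} (w x : Fin m → ℝ) : ℝ :=
  Real.sqrt (∑ i, w i * x i ^ 2)

/-- The mixed norm `‖y‖_{w+∞} = ‖y‖_∞ + C·‖y‖_w` (`‖·‖` on `Fin m → ℝ` is the `ℓ∞` norm). -/
noncomputable def mixNorm {m : ℕ} (C : ℝ) (w y : Fin m → ℝ) : ℝ :=
  ‖y‖ + C * wNorm w y

/-- The centrality measure
`δ_t(u) = inf_η ‖(t·c + u·a - Aη)/(u·√d)‖_{u+∞}` (entrywise operations). -/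
noncomputable def deltaC {m n : ℕ} (A : Matrix (Fin m) (Fin n) ℝ) (C : ℝ)
    (c a d : Fin m → ℝ) (t : ℝ) (u : Fin m → ℝ) : ℝ :=
  sInf (Set.range fun η : Fin n → ℝ =>
    mixNorm C u (fun i => (t * c i + u i * a i - A.mulVec η i) / (u i * Real.sqrt (d i))))

theorem aux_wNorm_add {m : ℕ} (w x y : Fin m → ℝ) (hw : ∀ i, 0 < w i) :
    wNorm w (fun i => x i + y i) ≤ wNorm w x + wNorm w y := by
  have key : ∀ z : Fin m → ℝ, wNorm w z =
      ‖(WithLp.toLp 2 (fun i => Real.sqrt (w i) * z i) : EuclideanSpace ℝ (Fin m))‖ := by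
    intro z
    rw [EuclideanSpace.norm_eq, wNorm]
    congr 1
    refine Finset.sum_congr rfl fun i _ => ?_
    simp only [Real.norm_eq_abs, sq_abs, mul_pow, Real.sq_sqrt (hw i).le]
  rw [key, key, key]
  refine le_trans (le_of_eq ?_) (norm_add_le _ _)
  congr 1
  ext i
  simp [mul_add]

theorem aux_wNorm_abs {m : ℕ} (w x : Fin m → ℝ) : wNorm w (fun i => |x i|) = wNorm w x := by
  simp [wNorm]

theorem aux_mix_nonneg {m : ℕ} (C : ℝ) (hC : 0 < C) (w y : Fin m → ℝ) : 0 ≤ mixNorm C w y := by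
  have : 0 ≤ wNorm w y := Real.sqrt_nonneg _
  unfold mixNorm
  positivity

theorem aux_main {m : ℕ} (C : ℝ) (hC : 0 < C) (w v y z L : Fin m → ℝ) (ε : ℝ)
    (hw : ∀ i, 0 < w i) (h0 : 0 ≤ ε) (h1 : ε ≤ 1/10)
    (hvw : ∀ i, v i ≤ Real.exp ε * w i)
    (hz : ∀ i, |z i| ≤ Real.exp ε * (|y i| + |L i|)) :
    mixNorm C v z ≤ (1 + 4 * ε) * (mixNorm C w y + mixNorm C w L) := by
  have e3 : Real.exp ε ^ 3 ≤ (1 + 4 * ε) ^ 2 := by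
    have h := Real.add_one_le_exp (-(3 * ε))
    have hm : Real.exp ε ^ 3 * Real.exp (-(3 * ε)) = 1 := by
      rw [← Real.exp_nat_mul, ← Real.exp_add]; simp
    have hp : 0 < Real.exp ε ^ 3 := by positivity
    have h2 : Real.exp ε ^ 3 * (1 - 3 * ε) ≤ 1 := by nlinarith
    have h3 : 1 ≤ (1 + 4 * ε) ^ 2 * (1 - 3 * ε) := by nlinarith [mul_nonneg h0 h0, mul_nonneg h0 (mul_nonneg h0 (sub_nonneg.2 h1))]
    exact le_of_mul_le_mul_right (h2.trans h3) (by linarith)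
  have ege : 1 ≤ Real.exp ε := Real.one_le_exp h0
  have e1 : Real.exp ε ≤ 1 + 4 * ε := by
    refine (pow_le_pow_iff_left₀ (by positivity) (by positivity) two_ne_zero).1 ?_
    refine le_trans ?_ e3
    exact pow_le_pow_right₀ ege (by norm_num)
  have hsup : ‖z‖ ≤ (1 + 4 * ε) * (‖y‖ + ‖L‖) := by
    refine (pi_norm_le_iff_of_nonneg (by positivity)).2 fun i => ?_
    have a1 : |y i| ≤ ‖y‖ := norm_le_pi_norm y i
    have a2 : |L i| ≤ ‖L‖ := norm_le_pi_norm L i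
    exact (hz i).trans (mul_le_mul e1 (add_le_add a1 a2) (by positivity) (by positivity))
  have hwn : wNorm v z ≤ (1 + 4 * ε) * (wNorm w y + wNorm w L) := by
    have t := aux_wNorm_add w (fun i => |y i|) (fun i => |L i|) hw
    rw [aux_wNorm_abs, aux_wNorm_abs] at t
    refine le_trans ?_ (mul_le_mul_of_nonneg_left t (by positivity))
    unfold wNorm
    refine Real.sqrt_le_iff.2 ⟨by positivity, ?_⟩
    rw [mul_pow, Real.sq_sqrt (Finset.sum_nonneg fun i _ => mul_nonneg (hw i).le (sq_nonneg _)), Finset.mul_sum]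
    refine Finset.sum_le_sum fun i _ => ?_
    have hq : z i ^ 2 ≤ (Real.exp ε * (|y i| + |L i|)) ^ 2 := by
      rw [← sq_abs (z i)]
      exact pow_le_pow_left₀ (abs_nonneg _) (hz i) 2
    have hwi := hw i
    calc v i * z i ^ 2 ≤ (Real.exp ε * w i) * (Real.exp ε * (|y i| + |L i|)) ^ 2 :=
          mul_le_mul (hvw i) hq (sq_nonneg _) (by positivity)
      _ = Real.exp ε ^ 3 * (w i * (|y i| + |L i|) ^ 2) := by ring
      _ ≤ _ := mul_le_mul_of_nonneg_right e3 (by positivity)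
  unfold mixNorm
  nlinarith [mul_le_mul_of_nonneg_left hwn hC.le]

/-- effect of changing the weights on centrality. -/
theorem centrality_w_change {m n : ℕ} (A : Matrix (Fin m) (Fin n) ℝ)
    (c : Fin m → ℝ) (t : ℝ) (ht : 0 < t) (Cnorm : ℝ) (hC : 0 < Cnorm)
    (a d : Fin m → ℝ) (hd : ∀ i, 0 < d i) (had : ∀ i, |a i| ≤ Real.sqrt (d i))
    (w v : Fin m → ℝ) (hw : ∀ i, 0 < w i) (hv : ∀ i, 0 < v i)
    (hε : mixNorm Cnorm w (fun i => Real.log (w i) - Real.log (v i)) ≤ 1/10) :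
    deltaC A Cnorm c a d t v ≤
      (1 + 4 * mixNorm Cnorm w (fun i => Real.log (w i) - Real.log (v i))) *
        (deltaC A Cnorm c a d t w +
          mixNorm Cnorm w (fun i => Real.log (w i) - Real.log (v i))) := by
  set L : Fin m → ℝ := fun i => Real.log (w i) - Real.log (v i) with hL
  have h0 := aux_mix_nonneg Cnorm hC w L
  have hLi : ∀ i, |L i| ≤ mixNorm Cnorm w L := by
    intro i
    have a2 : |L i| ≤ ‖L‖ := norm_le_pi_norm L i
    have : 0 ≤ Cnorm * wNorm w L := mul_nonneg hC.le (Real.sqrt_nonneg _)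
    unfold mixNorm
    linarith
  have hexp : ∀ i, Real.exp (L i) = w i / v i := by
    intro i
    rw [hL]
    simp only
    rw [Real.exp_sub, Real.exp_log (hw i), Real.exp_log (hv i)]
  have hpos : 0 < 1 + 4 * mixNorm Cnorm w L := by linarith
  rw [← div_le_iff₀' hpos, ← sub_le_iff_le_add]
  refine le_csInf (Set.range_nonempty _) ?_
  rintro _ ⟨η, rfl⟩
  rw [sub_le_iff_le_add, div_le_iff₀' hpos]
  unfold deltaC
  refine le_trans (csInf_le ⟨0, ?_⟩ (Set.mem_range_self η)) ?_
  · rintro _ ⟨η', rfl⟩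
    exact aux_mix_nonneg Cnorm hC _ _
  refine aux_main Cnorm hC w v _ _ L _ hw h0 hε ?_ ?_
  · intro i
    have h1 : v i = Real.exp (-L i) * w i := by
      have := hw i
      have := hv i
      rw [Real.exp_neg, hexp]
      field_simp
    calc v i = Real.exp (-L i) * w i := h1
      _ ≤ _ := mul_le_mul_of_nonneg_right
        (Real.exp_le_exp.2 ((neg_le_abs _).trans (hLi i))) (hw i).le
  · intro i
    have hwi := hw i
    have hvi := hv i
    have hs : 0 < Real.sqrt (d i) := Real.sqrt_pos.2 (hd i)
    have heq : (t * c i + v i * a i - A.mulVec η i) / (v i * Real.sqrt (d i)) =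
        Real.exp (L i) * ((t * c i + w i * a i - A.mulVec η i) / (w i * Real.sqrt (d i)))
        + (1 - Real.exp (L i)) * (a i / Real.sqrt (d i)) := by
      rw [hexp]
      field_simp
      ring
    rw [heq]
    have hb : |a i / Real.sqrt (d i)| ≤ 1 := by
      rw [abs_div, abs_of_pos hs]
      exact (div_le_one hs).2 (had i)
    have hE : Real.exp (L i) ≤ Real.exp (mixNorm Cnorm w L) :=
      Real.exp_le_exp.2 ((le_abs_self _).trans (hLi i))
    have hE1 : 1 ≤ Real.exp (mixNorm Cnorm w L) := Real.one_le_exp h0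
    have h1 : |1 - Real.exp (L i)| ≤ Real.exp (mixNorm Cnorm w L) * |L i| := by
      have p1 := Real.add_one_le_exp (L i)
      have p2 := Real.add_one_le_exp (-L i)
      have p3 : Real.exp (L i) * Real.exp (-L i) = 1 := by rw [← Real.exp_add]; simp
      have p4 := Real.exp_pos (L i)
      have q1 := le_abs_self (L i)
      have q2 := neg_le_abs (L i)
      have q3 := abs_nonneg (L i)
      have r1 : |L i| ≤ Real.exp (mixNorm Cnorm w L) * |L i| := le_mul_of_one_le_left q3 hE1
      have r2 : Real.exp (L i) * |L i| ≤ Real.exp (mixNorm Cnorm w L) * |L i| :=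
        mul_le_mul_of_nonneg_right hE q3
      have r3 : Real.exp (L i) * L i ≤ Real.exp (L i) * |L i| := mul_le_mul_of_nonneg_left q1 p4.le
      have r4 : Real.exp (L i) * (-L i + 1) ≤ 1 := (mul_le_mul_of_nonneg_left p2 p4.le).trans p3.le
      rw [abs_le]
      constructor <;> linarith
    refine (abs_add_le _ _).trans ?_
    rw [abs_mul, abs_mul, abs_of_pos (Real.exp_pos _), mul_add]
    refine add_le_add (mul_le_mul_of_nonneg_right hE (abs_nonneg _)) ?_
    exact (mul_le_of_le_one_right (abs_nonneg _) hb).trans h1
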